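/- arXiv:2006.01784 — 2 statements merged into one kernel-verified Lean document; each statement's English description precedes it below -/
import Mathlib

section
/- Every normalized cooperative game can be represented as a basic MC-Net: for any finite nonempty set N and any v : 2^N → ℝ with v(S) = 0 whenever |S| ≤ 1, there exists a finite indexed family of rules ρ_k = (P_k, N_k, v_k), with P_k ⊆ N, N_k ⊆ N, P_k ∩ N_k = ∅, and v_k ∈ ℝ ∖ {0}, such that for every S ⊆ N, v(S) equals the sum of v_k over all rules applicable to S. -/
/-!
For each coalition `T` with `v T ≠ 0`, take the rule `(T, Tᶜ, v T)`. It is applicable to `S`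
exactly when `T ⊆ S` and `S ⊆ T`, that is, when `S = T`. So the sum over the rules applicable
to `S` is the single term `v S` if `v S ≠ 0`, and is empty otherwise.
-/

theorem subset_and_disjoint_compl_iff {α : Type*} [Fintype α] [DecidableEq α]
    (T S : Finset α) : T ⊆ S ∧ Disjoint Tᶜ S ↔ T = S := by
  rw [disjoint_compl_left_iff]
  exact Finset.Subset.antisymm_iff.symm

/-- Every normalized cooperative game on a finite nonempty player set
can be represented as a basic MC-Net: there is a finite indexed family of rules
`ρ_k = (P k, Ng k, val k)` with `P k` and `Ng k` disjoint and `val k ≠ 0`, such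
that the value of every coalition `S` is the sum of `val k` over the rules
applicable to `S` (i.e. those with `P k ⊆ S` and `Ng k ∩ S = ∅`). -/
theorem normalized_game_is_mcnet {α : Type*} [Fintype α] [DecidableEq α]
    [Nonempty α] (v : Finset α → ℝ)
    (hnorm : ∀ S : Finset α, S.card ≤ 1 → v S = 0) :
    ∃ (n : ℕ) (P Ng : Fin n → Finset α) (val : Fin n → ℝ),
      (∀ k : Fin n, Disjoint (P k) (Ng k)) ∧
      (∀ k : Fin n, val k ≠ 0) ∧
      (∀ S : Finset α,
        v S = ∑ k ∈ Finset.univ.filter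
                (fun k : Fin n => P k ⊆ S ∧ Disjoint (Ng k) S), val k) := by
  classical
  let e : Fin (Fintype.card {T : Finset α // v T ≠ 0}) ≃ {T : Finset α // v T ≠ 0} :=
    (Fintype.equivFin _).symm
  refine ⟨_, fun k => (e k).1, fun k => ((e k).1)ᶜ, fun k => v (e k).1,
    fun k => disjoint_compl_right, fun k => (e k).2, fun S => ?_⟩
  simp only [subset_and_disjoint_compl_iff]
  by_cases hS : v S = 0
  · -- No rule is indexed by `S`: every applicable rule would have value `v S = 0`.
    rw [hS, Finset.sum_eq_zero]
    intro k hk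
    rw [(Finset.mem_filter.mp hk).2, hS]
  · have hfilter : Finset.univ.filter (fun k => (e k).1 = S) = {e.symm ⟨S, hS⟩} := by
      ext k
      simp [Equiv.eq_symm_apply, Subtype.ext_iff]
    rw [hfilter, Finset.sum_singleton, Equiv.apply_symm_apply]
end

section
/- The Shapley value is efficient: for any cooperative game (N, v) on a finite nonempty player set N, the Shapley values of all players sum to the value of the grand coalition, i.e., Σ_{i ∈ N} Φ_i(v) = v(N). -/
/-!
Summing the marginal contributions over all players and collecting the terms by coalition, a
coalition `T` of size `t` has the coefficient `t!(n-t)!/n!` both as a coalition that is joined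
(`sum_weight_insert`) and as a coalition that is enlarged (`sum_weight_self`), except that the grand
coalition is never enlarged (and `∅` is never joined, but `v ∅ = 0`). So all terms cancel except
that of the grand coalition, whose coefficient is `n! 0!/n! = 1`.
-/

/-- The Shapley value of player `i` in the cooperative game `v` on the player set
given by the finite type `α`:
`Φ_i(v) = Σ_{S ⊆ N \ {i}} (s!(n−s−1)!/n!) · (v(S ∪ {i}) − v(S))`. -/
noncomputable def shapley {α : Type*} [Fintype α] [DecidableEq α]
    (v : Finset α → ℝ) (i : α) : ℝ :=
  ∑ S ∈ (Finset.univ.erase i).powerset,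
    ((S.card.factorial * (Fintype.card α - S.card - 1).factorial : ℕ) : ℝ)
      / ((Fintype.card α).factorial : ℝ) * (v (insert i S) - v S)

/-- Each nonempty `T` is reached from `T.erase i` by each of its `t` members `i`, with weight
`(t-1)!(n-t)!/n!`, for a total of `t!(n-t)!/n!`. The term at `T = ∅` is handled by `v ∅ = 0`. -/
lemma sum_weight_insert {α : Type*} [Fintype α] [DecidableEq α]
    (v : Finset α → ℝ) (h0 : v ∅ = 0) :
    ∑ i : α, ∑ S ∈ (Finset.univ.erase i).powerset,
      ((S.card.factorial * (Fintype.card α - S.card - 1).factorial : ℕ) : ℝ)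
        / ((Fintype.card α).factorial : ℝ) * v (insert i S)
    = ∑ T : Finset α, ((T.card.factorial * (Fintype.card α - T.card).factorial : ℕ) : ℝ)
        / ((Fintype.card α).factorial : ℝ) * v T := by
  have h : ∀ i : α, ∑ S ∈ (Finset.univ.erase i).powerset,
      ((S.card.factorial * (Fintype.card α - S.card - 1).factorial : ℕ) : ℝ)
        / ((Fintype.card α).factorial : ℝ) * v (insert i S)
      = ∑ T : Finset α with i ∈ T,
        (((T.card - 1).factorial * (Fintype.card α - T.card).factorial : ℕ) : ℝ)
        / ((Fintype.card α).factorial : ℝ) * v T := by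
    intro i
    refine Finset.sum_bij' (fun S _ => insert i S) (fun T _ => T.erase i) ?_ ?_ ?_ ?_ ?_
    · intro S _
      simp
    · intro T _
      simpa using Finset.erase_subset_erase i (Finset.subset_univ T)
    · intro S hS
      have : i ∉ S := fun hi => by simpa using Finset.mem_powerset.1 hS hi
      simp [this]
    · intro T hT
      exact Finset.insert_erase (Finset.mem_filter.1 hT).2
    · intro S hS
      have : i ∉ S := fun hi => by simpa using Finset.mem_powerset.1 hS hi
      simp [Finset.card_insert_of_notMem this, Nat.sub_sub]
  rw [Finset.sum_congr rfl fun i _ => h i]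
  simp only [Finset.sum_filter]
  rw [Finset.sum_comm]
  refine Finset.sum_congr rfl fun T _ => ?_
  rw [← Finset.sum_filter, Finset.sum_const, Finset.filter_univ_mem, nsmul_eq_mul]
  rcases T.eq_empty_or_nonempty with rfl | hT
  · simp [h0]
  · rw [← Nat.mul_factorial_pred hT.card_pos.ne']
    push_cast
    ring

/-- Each `S ≠ univ` is left by each of the `n-s` players outside it, with weight
`s!(n-s-1)!/n!`, for a total of `s!(n-s)!/n!`. -/
lemma sum_weight_self {α : Type*} [Fintype α] [DecidableEq α] (v : Finset α → ℝ) :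
    ∑ i : α, ∑ S ∈ (Finset.univ.erase i).powerset,
      ((S.card.factorial * (Fintype.card α - S.card - 1).factorial : ℕ) : ℝ)
        / ((Fintype.card α).factorial : ℝ) * v S
    = ∑ S ∈ Finset.univ.erase Finset.univ,
      ((S.card.factorial * (Fintype.card α - S.card).factorial : ℕ) : ℝ)
        / ((Fintype.card α).factorial : ℝ) * v S := by
  have h : ∀ i : α, (Finset.univ.erase i).powerset
      = Finset.univ.filter fun S : Finset α => i ∉ S := by
    intro i
    ext S
    simp [Finset.subset_erase]
  simp only [h, Finset.sum_filter]
  rw [Finset.sum_comm]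
  symm
  refine Finset.sum_subset_zero_on_sdiff (Finset.subset_univ _) ?_ ?_
  · intro S hS
    have : S = Finset.univ := by simpa using hS
    simp [this]
  · intro S hS
    have hlt : S.card < Fintype.card α :=
      (Finset.card_lt_iff_ne_univ S).2 (Finset.ne_of_mem_erase hS)
    have hc : (Finset.univ.filter fun i => i ∉ S).card = Fintype.card α - S.card := by
      rw [← Finset.card_compl]
      congr 1
      ext i
      simp
    rw [← Finset.sum_filter, Finset.sum_const, hc, nsmul_eq_mul,
      ← Nat.mul_factorial_pred (Nat.sub_pos_of_lt hlt).ne']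
    push_cast
    ring

/-- The Shapley value is efficient: in any cooperative game on a
finite nonempty player set, the Shapley values of all players sum to the value
of the grand coalition. -/
theorem shapley_efficiency {α : Type*} [Fintype α] [DecidableEq α] [Nonempty α]
    (v : Finset α → ℝ) (h0 : v ∅ = 0) :
    (∑ i : α, shapley v i) = v Finset.univ := by
  simp only [shapley, mul_sub, Finset.sum_sub_distrib]
  rw [sum_weight_insert v h0, sum_weight_self, ← Finset.add_sum_erase _ _ (Finset.mem_univ _),
    add_sub_cancel_right]
  simp [Nat.factorial_ne_zero]
end
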